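/- arXiv:math/9812168 — 2 statements merged into one kernel-verified Lean document; each statement's English description precedes it below -/
import Mathlib

section
/- Let G be a finite group with a normal subgroup V such that V is an elementary abelian 2-group, the quotient W = G/V is an elementary abelian 2-group, and V is of maximal rank in G. Assume moreover that the conjugation action of G on V permutes a basis, i.e. there is a subset B ⊆ V which is an 𝔽₂-basis of V (so |B| = rank V and B generates V) such that for every g ∈ G conjugation by g maps B onto B. Then rank(W) ≤ rank(V) + rank(V ∩ Z(G)). -/
/-- A subgroup is an elementary abelian 2-group: every element squares to the
identity (such a subgroup is automatically abelian). -/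
def IsElemAbelian2 {G : Type*} [Group G] (A : Subgroup G) : Prop :=
  (∀ a ∈ A, a * a = 1) ∧ ∀ a ∈ A, ∀ b ∈ A, a * b = b * a

/-- A subgroup `V` of `G` has maximal rank if every elementary abelian
2-subgroup `A` of `G` satisfies `|A| ≤ |V|`. -/
def IsMaximalRank2 {G : Type*} [Group G] (V : Subgroup G) : Prop :=
  ∀ A : Subgroup G, IsElemAbelian2 A → Nat.card A ≤ Nat.card V

/-- By Chevalley–Warning, an anisotropic quadratic map over a finite field has source of rank at
most twice the rank of its target. -/
theorem QuadraticMap.Anisotropic.finrank_le {K U M : Type*} [Field K] [Finite K]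
    [AddCommGroup U] [Module K U] [Module.Finite K U] [AddCommGroup M] [Module K M]
    [Module.Finite K M] {Q : QuadraticMap K U M} (hQ : Q.Anisotropic) :
    Module.finrank K U ≤ 2 * Module.finrank K M := by
  classical
  by_contra! hlt
  have := Fintype.ofFinite K
  obtain ⟨p, hp⟩ := CharP.exists K
  obtain ⟨B, rfl⟩ := LinearMap.BilinMap.toQuadraticMap_surjective Q
  let u := Module.finBasis K U
  let e := Module.finBasis K M
  let f (k : Fin (Module.finrank K M)) : MvPolynomial (Fin (Module.finrank K U)) K :=
    ∑ i, ∑ j, .C (e.repr (B (u i) (u j)) k) * (.X i * .X j)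
  have hdeg (k) : (f k).totalDegree ≤ 2 := by
    refine MvPolynomial.totalDegree_finsetSum_le fun i _ ↦
      MvPolynomial.totalDegree_finsetSum_le fun j _ ↦ ?_
    refine (MvPolynomial.totalDegree_mul _ _).trans ?_
    have := MvPolynomial.totalDegree_mul (R := K) (.X i) (.X j)
    simp only [MvPolynomial.totalDegree_C, MvPolynomial.totalDegree_X] at this ⊢
    omega
  have heval (x k) : (f k).eval x =
      e.repr (B.toQuadraticMap (∑ i, x i • u i)) k := by
    simp only [f, map_sum, map_mul, MvPolynomial.eval_C, MvPolynomial.eval_X,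
      LinearMap.BilinMap.toQuadraticMap_apply, LinearMap.sum_apply, map_smul,
      LinearMap.smul_apply, Finsupp.coe_finsetSum, Finset.sum_apply, Finsupp.smul_apply,
      smul_eq_mul]
    rw [Finset.sum_comm]
    refine Finset.sum_congr rfl fun i _ ↦ ?_
    rw [Finset.mul_sum]
    exact Finset.sum_congr rfl fun j _ ↦ by ring
  have hsum : ∑ k, (f k).totalDegree < Fintype.card (Fin (Module.finrank K U)) := by
    refine (Finset.sum_le_sum fun k _ ↦ hdeg k).trans_lt ?_
    simpa [mul_comm] using hlt
  have hdvd := char_dvd_card_solutions_of_fintype_sum_lt p hsum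
  have hsol (x : Fin (Module.finrank K U) → K) : (∀ k, (f k).eval x = 0) ↔ x = 0 := by
    constructor
    · intro hx
      have h0 : ∑ i, x i • u i = 0 := hQ _ <| e.repr.injective <| by
        ext k; simpa [heval] using hx k
      ext i
      exact Fintype.linearIndependent_iff.mp u.linearIndependent x h0 i
    · rintro rfl k
      simp only [heval, Pi.zero_apply, zero_smul, Finset.sum_const_zero, map_zero,
        Finsupp.coe_zero]
  simp only [hsol, Fintype.card_unique, Nat.dvd_one] at hdvd
  exact CharP.char_ne_one K p hdvd

/-- If squaring sends a finite group `K` into a central subgroup `Z` of exponent two, and the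
elements of order at most two form a central subgroup `N`, then squaring induces an anisotropic
quadratic map `K ⧸ N → Z`, which bounds the index of `N`. -/
theorem Subgroup.index_le_card_sq_of_sq_mem {K : Type*} [Group K] [Finite K]
    (N Z : Subgroup K) [N.Normal] (hN : N ≤ Subgroup.center K)
    (hN2 : ∀ x : K, x ∈ N ↔ x * x = 1) (hZ : Z ≤ N) (hsq : ∀ x : K, x * x ∈ Z) :
    N.index ≤ Nat.card Z ^ 2 := by
  have hc (x y : K) : y * (x * x) = x * x * y := Subgroup.mem_center_iff.mp (hN (hZ (hsq x))) y
  have hs4 (x : K) : x * x * (x * x) = 1 := (hN2 _).mp (hZ (hsq x))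
  have hinv (x : K) : x * x * x = x⁻¹ := eq_inv_of_mul_eq_one_left (by rw [mul_assoc, hs4])
  have hswap (x y : K) : y * x = x * y * (x * y) * (x * x) * (y * y) * (x * y) := by
    calc y * x = x⁻¹ * (x * y * (x * y)) * y⁻¹ := by group
      _ = x * y * (x * y) * (x⁻¹ * y⁻¹) := by rw [hc]; group
      _ = x * y * (x * y) * (x * x * (x * (y * y)) * y) := by
        rw [← hinv x, ← hinv y]; simp only [mul_assoc]
      _ = _ := by rw [hc y x]; simp only [mul_assoc]
  let s (x : K) : Z := ⟨x * x, hsq x⟩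
  have hs_mul (x n : K) (hn : n ∈ N) : s (x * n) = s x := Subtype.ext <| by
    have hnx : n * x = x * n := (Subgroup.mem_center_iff.mp (hN hn) x).symm
    change x * n * (x * n) = x * x
    rw [mul_assoc, ← mul_assoc n, hnx, mul_assoc, (hN2 n).mp hn, mul_one]
  let : CommGroup (K ⧸ N) :=
    { mul_comm := by
        rintro ⟨x⟩ ⟨y⟩
        refine QuotientGroup.eq.mpr ?_
        have h := hZ (Z.mul_mem (Z.mul_mem (hsq (x * y)) (hsq x)) (hsq y))
        change (x * y)⁻¹ * (y * x) ∈ N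
        rw [hswap x y, ← Subgroup.mem_center_iff.mp (hN h), inv_mul_cancel_left]
        exact h }
  let : CommGroup Z :=
    { mul_comm := fun a b ↦ Subtype.ext (Subgroup.mem_center_iff.mp (hN (hZ b.2)) a) }
  have hswapZ (x x' y : K) : s (x * x' * y) =
      s (x * y) * s x * s y * (s (x * x') * s x * s x') * (s x * s (x' * y)) := Subtype.ext <| by
    have hzc (z : Z) (a : K) : a * z = z * a := Subgroup.mem_center_iff.mp (hN (hZ z.2)) a
    have hyx : y * x = (s (x * y) * s x * s y : Z) * (x * y) := hswap x y
    have hx'x : x' * x = (s (x * x') * s x * s x' : Z) * (x * x') := hswap x x'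
    calc x * x' * y * (x * x' * y) = x * x' * (y * x) * x' * y := by group
      _ = (s (x * y) * s x * s y : Z) * (x * (x' * x) * y * x' * y) := by
        rw [hyx, ← mul_assoc (x * x'), hzc]; group
      _ = (s (x * y) * s x * s y : Z) * ((s (x * x') * s x * s x' : Z) *
          (x * x * (x' * y * (x' * y)))) := by
        rw [hx'x, ← mul_assoc x, hzc]; group
      _ = _ := by simp only [s, Subgroup.coe_mul, mul_assoc]
  let : Module (ZMod 2) (Additive (K ⧸ N)) := AddCommGroup.zmodModule fun w ↦ by
    obtain ⟨x, hx⟩ := QuotientGroup.mk_surjective w.toMul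
    rw [two_nsmul]
    change w.toMul * w.toMul = 1
    rw [← hx]
    exact (QuotientGroup.eq_one_iff _).mpr (hZ (hsq x))
  have hz2 (z : Z) : z * z = 1 := Subtype.ext ((hN2 _).mp (hZ z.2))
  let : Module (ZMod 2) (Additive Z) := AddCommGroup.zmodModule fun z ↦ by
    rw [two_nsmul]
    exact hz2 z.toMul
  let f (w : Additive (K ⧸ N)) : Additive Z := .ofMul (s w.toMul.out)
  have hf (x : K) : f (.ofMul x) = .ofMul (s x) := by
    obtain ⟨n, hn⟩ := QuotientGroup.mk_out_eq_mul N x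
    change Additive.ofMul (s (QuotientGroup.mk x : K ⧸ N).out) = _
    rw [hn, hs_mul _ _ n.2]
  have hind {P : Additive (K ⧸ N) → Prop} (h : ∀ x : K, P (.ofMul x)) (w) : P w := by
    obtain ⟨x, hx⟩ := QuotientGroup.mk_surjective w.toMul
    have hw : w = .ofMul (x : K ⧸ N) := hx.symm
    exact hw ▸ h x
  have hf0 : f 0 = 0 := (hf 1).trans (congrArg _ (Subtype.ext (mul_one 1)))
  have hZ2 (z : Additive Z) : z + z = 0 := hz2 z.toMul
  let Q : QuadraticMap (ZMod 2) (Additive (K ⧸ N)) (Additive Z) := .ofPolar f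
    (fun a w ↦ by
      obtain rfl | rfl : a = 0 ∨ a = 1 := by decide +revert
      · simp [hf0]
      · simp)
    (hind fun x ↦ hind fun x' ↦ hind fun y ↦ by
      have h1 : f (.ofMul (x : K ⧸ N) + .ofMul (x' : K ⧸ N)) = .ofMul (s (x * x')) := hf _
      have h2 : f (.ofMul (x : K ⧸ N) + .ofMul (y : K ⧸ N)) = .ofMul (s (x * y)) := hf _
      have h3 : f (.ofMul (x' : K ⧸ N) + .ofMul (y : K ⧸ N)) = .ofMul (s (x' * y)) := hf _
      have h4 : f (.ofMul (x : K ⧸ N) + .ofMul (x' : K ⧸ N) + .ofMul (y : K ⧸ N)) =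
        .ofMul (s (x * x' * y)) := hf _
      have hneg (z : Additive Z) : -z = z := neg_eq_of_add_eq_zero_left (hZ2 z)
      simp only [QuadraticMap.polar, h1, h2, h3, h4, hf, hswapZ, ofMul_mul, sub_eq_add_neg, hneg]
      have hx := hZ2 (.ofMul (s x))
      have hxx := hZ2 (.ofMul (s (x * x')))
      linear_combination (norm := module) hx + hxx)
    (fun a v w ↦ by
      obtain rfl | rfl : a = 0 ∨ a = 1 := by decide +revert
      · simp [QuadraticMap.polar, hf0]
      · simp)
  have hQ : Q.Anisotropic := hind fun x hx ↦ by
    have hx1 : s x = 1 := (hf x).symm.trans hx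
    exact (QuotientGroup.eq_one_iff x).mpr ((hN2 x).mpr (congrArg Subtype.val hx1))
  have hcard (E : Type _) [AddCommGroup E] [Module (ZMod 2) E] [Finite E] :
      Nat.card E = 2 ^ Module.finrank (ZMod 2) E := by
    simpa using Module.natCard_eq_pow_finrank (K := ZMod 2) (V := E)
  calc N.index = Nat.card (Additive (K ⧸ N)) := rfl
    _ = 2 ^ Module.finrank (ZMod 2) (Additive (K ⧸ N)) := hcard _
    _ ≤ 2 ^ (2 * Module.finrank (ZMod 2) (Additive Z)) :=
      Nat.pow_le_pow_right two_pos hQ.finrank_le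
    _ = Nat.card (Additive Z) ^ 2 := by rw [hcard (Additive Z), ← pow_mul, mul_comm]
    _ = Nat.card Z ^ 2 := rfl

open MulAction in
/-- Every point is a translate of the chosen representative of its orbit. -/
theorem MulAction.exists_smul_out_eq {G X : Type*} [Group G] [MulAction G X] (x : X) :
    ∃ g : G, g • (Quotient.mk'' x : orbitRel.Quotient G X).out = x :=
  (orbitRel G X).symm (Quotient.mk_out (s := orbitRel G X) x)

open MulAction in
/-- If commutators act trivially, an element of `G` acts on an orbit through its effect on a single
point, so the image of `G` in the permutation group of `X` is small. -/
theorem MulAction.index_ker_mul_two_pow_card_orbits_le {G X : Type*} [Group G] [Finite X]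
    [MulAction G X] (hcomm : ∀ (g h : G) (x : X), g • h • x = h • g • x) :
    (toPermHom G X).ker.index * 2 ^ Nat.card (orbitRel.Quotient G X) ≤ 2 ^ Nat.card X := by
  classical
  have := Fintype.ofFinite X
  have := Fintype.ofFinite (orbitRel.Quotient G X)
  let F (σ : (toPermHom G X).range) (ω : orbitRel.Quotient G X) : orbit G ω.out :=
    ⟨σ.1 ω.out, by obtain ⟨_, g, rfl⟩ := σ; exact ⟨g, rfl⟩⟩
  have hF : Function.Injective F := by
    rintro ⟨_, g, rfl⟩ ⟨_, h, rfl⟩ hgh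
    refine Subtype.ext (Equiv.ext fun x ↦ ?_)
    obtain ⟨k, hk⟩ := exists_smul_out_eq (G := G) x
    have h0 : g • (Quotient.mk'' x : orbitRel.Quotient G X).out =
        h • (Quotient.mk'' x : orbitRel.Quotient G X).out :=
      congrArg Subtype.val (congrFun hgh (Quotient.mk'' x))
    change g • x = h • x
    rw [← hk, hcomm, h0, hcomm]
  have hX : Nat.card X = ∑ ω : orbitRel.Quotient G X, Nat.card (orbit G ω.out) := by
    rw [Nat.card_congr (selfEquivSigmaOrbits G X), Nat.card_sigma]
  calc (toPermHom G X).ker.index * 2 ^ Nat.card (orbitRel.Quotient G X)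
      ≤ (∏ ω : orbitRel.Quotient G X, Nat.card (orbit G ω.out)) *
          ∏ _ω : orbitRel.Quotient G X, 2 := by
        rw [Subgroup.index_ker, ← Nat.card_pi, Finset.prod_const, Finset.card_univ,
          Nat.card_eq_fintype_card (α := orbitRel.Quotient G X)]
        exact Nat.mul_le_mul_right _ (Nat.card_le_card_of_injective F hF)
    _ = ∏ ω : orbitRel.Quotient G X, Nat.card (orbit G ω.out) * 2 := by
        rw [Finset.prod_mul_distrib]
    _ ≤ ∏ ω : orbitRel.Quotient G X, 2 ^ Nat.card (orbit G ω.out) := by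
        refine Finset.prod_le_prod' fun ω _ ↦ ?_
        obtain ⟨k, hk⟩ : ∃ k, Nat.card (orbit G ω.out) = k + 1 :=
          Nat.exists_eq_succ_of_ne_zero
            (@Nat.card_pos _ (nonempty_orbit _).to_subtype _).ne'
        rw [hk, pow_succ]
        exact Nat.mul_le_mul_right _ k.lt_two_pow_self
    _ = 2 ^ Nat.card X := by rw [hX, Finset.prod_pow_eq_pow_sum]

open MulAction in
/-- A vector fixed by a group permuting a basis has coordinates constant on orbits. -/
theorem Module.Basis.card_fixed_le {K M G X : Type*} [Field K] [Finite K] [AddCommGroup M]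
    [Module K M] [Group G] [Finite X] [MulAction G X] (b : Module.Basis X K M)
    (ρ : G → M →ₗ[K] M) (hρ : ∀ g x, ρ g (b x) = b (g • x)) :
    Nat.card {v : M // ∀ g, ρ g v = v} ≤ Nat.card K ^ Nat.card (orbitRel.Quotient G X) := by
  have hinv (v : M) (hv : ∀ g, ρ g v = v) (g : G) (x : X) : b.repr v (g • x) = b.repr v x := by
    have h : (Finsupp.lapply (g • x) ∘ₗ b.repr.toLinearMap) ∘ₗ ρ g =
        Finsupp.lapply x ∘ₗ b.repr.toLinearMap := b.ext fun y ↦ by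
      classical
      simp [hρ, Finsupp.single_apply]
    simpa [hv g] using LinearMap.congr_fun h v
  rw [← Nat.card_fun]
  refine Nat.card_le_card_of_injective
    (fun v (ω : orbitRel.Quotient G X) ↦ b.repr v.1 ω.out) fun v w hvw ↦ ?_
  refine Subtype.ext (b.ext_elem fun x ↦ ?_)
  obtain ⟨k, hk⟩ := exists_smul_out_eq (G := G) x
  rw [← hk, hinv _ v.2, hinv _ w.2]
  exact congrFun hvw (Quotient.mk'' x)

/-- In a group extension of groups of exponent two, an element centralizing the kernel has a
central square. -/
theorem mul_self_mem_center_of_mem_centralizer {G : Type*} [Group G] {V : Subgroup G} [V.Normal]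
    (hV : IsElemAbelian2 V) (hW : ∀ w : G ⧸ V, w * w = 1) {x : G}
    (hx : x ∈ Subgroup.centralizer (V : Set G)) : x * x ∈ Subgroup.center G := by
  rw [Subgroup.mem_center_iff]
  intro g
  have hinv (w : G ⧸ V) : w⁻¹ = w := inv_eq_of_mul_eq_one_left (hW w)
  have hv : x⁻¹ * (g⁻¹ * x * g) ∈ V := by
    rw [← QuotientGroup.eq_one_iff]
    simp only [QuotientGroup.mk_mul, QuotientGroup.mk_inv, hinv, ← mul_assoc]
    simpa [mul_assoc] using hW ((x : G ⧸ V) * g)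
  obtain ⟨v, hvV, hxv⟩ : ∃ v ∈ V, g⁻¹ * x * g = x * v := ⟨_, hv, by group⟩
  have hcomm : v * x = x * v := Subgroup.mem_centralizer_iff.mp hx v hvV
  have h : g⁻¹ * (x * x) * g = x * x := by
    calc g⁻¹ * (x * x) * g = (g⁻¹ * x * g) * (g⁻¹ * x * g) := by group
      _ = x * (v * x) * v := by rw [hxv]; simp only [mul_assoc]
      _ = x * x * (v * v) := by rw [hcomm]; simp only [mul_assoc]
      _ = x * x := by rw [hV.1 v hvV, mul_one]
  calc g * (x * x) = g * (g⁻¹ * (x * x) * g) := by rw [h]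
    _ = x * x * g := by group

/-- An involution centralizing an elementary abelian 2-subgroup of maximal rank belongs to it. -/
theorem IsMaximalRank2.mem_of_mul_self_eq_one {G : Type*} [Group G] [Finite G] {V : Subgroup G}
    [V.Normal] (hV : IsElemAbelian2 V) (hmax : IsMaximalRank2 V) {x : G}
    (hx : x ∈ Subgroup.centralizer (V : Set G)) (hx2 : x * x = 1) : x ∈ V := by
  have hsq : ∀ a ∈ V ⊔ Subgroup.zpowers x, a * a = 1 := by
    intro a ha
    obtain ⟨v, hv, _, ⟨k, rfl⟩, rfl⟩ := Subgroup.mem_sup_of_normal_left.mp ha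
    have hvx : Commute v x := Subgroup.mem_centralizer_iff.mp hx v hv
    change v * x ^ k * (v * x ^ k) = 1
    rw [(hvx.zpow_right k).symm.mul_mul_mul_comm, hV.1 v hv, ← (Commute.refl x).mul_zpow, hx2,
      one_zpow, mul_one]
  have hinv (a) (ha : a ∈ V ⊔ Subgroup.zpowers x) : a⁻¹ = a :=
    inv_eq_of_mul_eq_one_left (hsq a ha)
  have hle := hmax (V ⊔ Subgroup.zpowers x) ⟨hsq, fun a ha b hb ↦ by
    rw [← hinv _ (mul_mem ha hb), mul_inv_rev, hinv a ha, hinv b hb]⟩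
  rw [Subgroup.eq_of_le_of_card_ge le_sup_left hle]
  exact Subgroup.mem_sup_right (Subgroup.mem_zpowers x)

open MulAction in
/-- For a group permuting a basis of a normal elementary abelian 2-subgroup `V`, the rank of
`V ∩ Z(G)` is at most the number of orbits on the basis. -/
theorem card_inf_center_le_two_pow_card_orbits {G : Type*} [Group G] [Finite G] {V : Subgroup G}
    [V.Normal] (hV : IsElemAbelian2 V) {X : Type*} [Finite X] [MulAction G X]
    (hX : Nat.card V = 2 ^ Nat.card X) (b : X → G)
    (hb : Subgroup.closure (Set.range b) = V) (hbg : ∀ (g : G) x, b (g • x) = g * b x * g⁻¹) :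
    Nat.card (V ⊓ Subgroup.center G : Subgroup G) ≤ 2 ^ Nat.card (orbitRel.Quotient G X) := by
  have := Fintype.ofFinite X
  have hbV (x) : b x ∈ V := hb ▸ Subgroup.subset_closure ⟨x, rfl⟩
  let : CommGroup V := { mul_comm := fun a b ↦ Subtype.ext (hV.2 a a.2 b b.2) }
  let : Module (ZMod 2) (Additive V) := AddCommGroup.zmodModule fun v ↦ by
    rw [two_nsmul]
    exact Subtype.ext (hV.1 _ v.toMul.2)
  let b' (x : X) : Additive V := .ofMul ⟨b x, hbV x⟩
  have hspan : ⊤ ≤ Submodule.span (ZMod 2) (Set.range b') := by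
    have h (v : G) (hv : v ∈ Subgroup.closure (Set.range b)) :
        ∀ hvV : v ∈ V, Additive.ofMul (⟨v, hvV⟩ : V) ∈ Submodule.span (ZMod 2) (Set.range b') := by
      induction hv using Subgroup.closure_induction with
      | mem v hv =>
        obtain ⟨x, rfl⟩ := hv
        exact fun _ ↦ Submodule.subset_span ⟨x, rfl⟩
      | one => exact fun _ ↦ zero_mem _
      | mul v w hv hw ihv ihw => exact fun _ ↦ add_mem (ihv (hb ▸ hv)) (ihw (hb ▸ hw))
      | inv v hv ih => exact fun _ ↦ neg_mem (ih (hb ▸ hv))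
    rintro v -
    exact h v.toMul (hb ▸ v.toMul.2) v.toMul.2
  have hrank : Fintype.card X = Module.finrank (ZMod 2) (Additive V) := by
    have h : Nat.card (Additive V) = 2 ^ Module.finrank (ZMod 2) (Additive V) := by
      simpa using Module.natCard_eq_pow_finrank (K := ZMod 2) (V := Additive V)
    rw [← Nat.card_eq_fintype_card]
    exact Nat.pow_right_injective le_rfl (hX.symm.trans h)
  let ρ (g : G) : Additive V →ₗ[ZMod 2] Additive V :=
    (MulAut.conjNormal g : MulAut V).toMonoidHom.toAdditive.toZModLinearMap 2
  have hle := (basisOfTopLeSpanOfCardEqFinrank b' hspan hrank).card_fixed_le ρ fun g x ↦ by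
    rw [coe_basisOfTopLeSpanOfCardEqFinrank]
    exact congrArg Additive.ofMul (Subtype.ext (hbg g x).symm)
  rw [Nat.card_zmod] at hle
  refine le_trans (Nat.card_le_card_of_injective
    (fun z : (V ⊓ Subgroup.center G : Subgroup G) ↦
      (⟨.ofMul ⟨z.1, z.2.1⟩, fun g ↦ congrArg Additive.ofMul (Subtype.ext ?_)⟩ :
        {v : Additive V // ∀ g, ρ g v = v})) fun z w h ↦ ?_) hle
  · change g * z.1 * g⁻¹ = z.1
    rw [Subgroup.mem_center_iff.mp z.2.2, mul_inv_cancel_right]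
  · exact Subtype.ext (congrArg (fun v ↦ (v.1.toMul : G)) h)

theorem stmt0 (G : Type*) [Group G] [Finite G] (V : Subgroup G) [V.Normal]
    (hV : IsElemAbelian2 V) (hmax : IsMaximalRank2 V)
    (hW : ∀ w : G ⧸ V, w * w = 1)
    (nV nW nZ : ℕ)
    (hnV : Nat.card V = 2 ^ nV)
    (hnW : Nat.card (G ⧸ V) = 2 ^ nW)
    (hnZ : Nat.card (V ⊓ Subgroup.center G : Subgroup G) = 2 ^ nZ)
    -- B is an 𝔽₂-basis of V: a generating subset of V of cardinality rank V
    (B : Finset G)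
    (hBV : (B : Set G) ⊆ (V : Set G))
    (hBgen : Subgroup.closure (B : Set G) = V)
    (hBcard : B.card = nV)
    -- conjugation by any element of G permutes the basis B
    (hBperm : ∀ g : G, (fun b : G => g * b * g⁻¹) '' (B : Set G) = (B : Set G)) :
    nW ≤ nV + nZ := by
  let : MulAction G B :=
    { smul := fun g b ↦ ⟨g * b * g⁻¹, by
        have h := hBperm g ▸ Set.mem_image_of_mem (fun b : G ↦ g * b * g⁻¹) b.2
        exact h⟩
      one_smul := fun b ↦ Subtype.ext (show 1 * (b : G) * 1⁻¹ = b by group)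
      mul_smul := fun g h b ↦ Subtype.ext
        (show g * h * (b : G) * (g * h)⁻¹ = g * (h * b * h⁻¹) * g⁻¹ by group) }
  have hsmul (g : G) (b : B) : ((g • b : B) : G) = g * b * g⁻¹ := rfl
  have hB : Nat.card B = nV := by simp [hBcard]
  have hclosure : Subgroup.closure (Set.range ((↑) : B → G)) = V := by
    rw [Subtype.range_coe_subtype]
    exact hBgen
  set C := Subgroup.centralizer (V : Set G)
  have hVC : V ≤ C := fun v hv ↦ Subgroup.mem_centralizer_iff.mpr fun w hw ↦ hV.2 w hw v hv
  have hker : (MulAction.toPermHom G B).ker ≤ C := by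
    intro g hg
    have hle : Subgroup.closure (B : Set G) ≤ Subgroup.centralizer {g} := by
      refine (Subgroup.closure_le _).mpr fun b hb ↦ Subgroup.mem_centralizer_singleton_iff.mpr ?_
      have h : g * b * g⁻¹ = b := congrArg Subtype.val (Equiv.congr_fun hg (⟨b, hb⟩ : B))
      exact (mul_inv_eq_iff_eq_mul.mp h).symm
    rw [hBgen] at hle
    exact Subgroup.mem_centralizer_iff.mpr fun v hv ↦
      Subgroup.mem_centralizer_singleton_iff.mp (hle hv)
  have hZ := card_inf_center_le_two_pow_card_orbits hV (hB ▸ hnV) ((↑) : B → G) hclosure hsmul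
  have horb := MulAction.index_ker_mul_two_pow_card_orbits_le (G := G) (X := B) fun g h b ↦ by
    have hv : (h * g)⁻¹ * (g * h) ∈ V := by
      have hinv (w : G ⧸ V) : w⁻¹ = w := inv_eq_of_mul_eq_one_left (hW w)
      rw [← QuotientGroup.eq_one_iff, QuotientGroup.mk_mul, QuotientGroup.mk_inv, hinv,
        QuotientGroup.mk_mul, QuotientGroup.mk_mul, mul_assoc, ← mul_assoc (g : G ⧸ V), hW,
        one_mul, hW]
    have hfix : ((h * g)⁻¹ * (g * h)) • b = b := Subtype.ext <| by
      rw [hsmul, hV.2 _ hv _ (hBV b.2), mul_inv_cancel_right]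
    rw [← mul_smul, ← mul_smul, ← inv_smul_eq_iff, ← mul_smul, hfix]
  have hC : V.relIndex C ≤ Nat.card (V ⊓ Subgroup.center G : Subgroup G) ^ 2 := by
    have h := Subgroup.index_le_card_sq_of_sq_mem (V.subgroupOf C)
      ((V ⊓ Subgroup.center G).subgroupOf C)
      (fun v hv ↦ Subgroup.mem_center_iff.mpr fun x ↦
        Subtype.ext (Subgroup.mem_centralizer_iff.mp x.2 v hv).symm)
      (fun x ↦ ⟨fun hx ↦ Subtype.ext (hV.1 x hx),
        fun hx ↦ hmax.mem_of_mul_self_eq_one hV x.2 (congrArg Subtype.val hx)⟩)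
      (fun x hx ↦ hx.1)
      (fun x ↦ ⟨(QuotientGroup.eq_one_iff _).mp (hW x),
        mul_self_mem_center_of_mem_centralizer hV hW x.2⟩)
    rwa [Nat.card_congr (Subgroup.subgroupOfEquivOfLe (inf_le_left.trans hVC)).toEquiv] at h
  rw [hnZ] at hZ hC
  rw [hB] at horb
  refine (Nat.pow_le_pow_iff_right one_lt_two).mp ?_
  calc 2 ^ nW = V.relIndex C * C.index := by rw [Subgroup.relIndex_mul_index hVC, ← hnW]; rfl
    _ ≤ (2 ^ nZ) ^ 2 * (MulAction.toPermHom G B).ker.index :=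
      Nat.mul_le_mul hC (Nat.le_of_dvd
        (Nat.pos_of_ne_zero Subgroup.index_ne_zero_of_finite) (Subgroup.index_dvd_of_le hker))
    _ = (MulAction.toPermHom G B).ker.index * 2 ^ nZ * 2 ^ nZ := by ring
    _ ≤ 2 ^ nV * 2 ^ nZ :=
      Nat.mul_le_mul_right _ ((Nat.mul_le_mul_left _ hZ).trans horb)
    _ = 2 ^ (nV + nZ) := (pow_add ..).symm
end

section
/- Let G be a finite group with a normal subgroup V such that V is an elementary abelian 2-group, the quotient W = G/V is an elementary abelian 2-group, and V is of maximal rank in G. Then 4·rank(W) ≤ 8·rank(V ∩ Z(G)) + (rank V)², i.e. rank(W) ≤ 2·rank(V^W) + (rank V)²/4. -/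
theorem QuadraticMap.finrank_le_two_mul_of_anisotropic {K X Z : Type*} [Field K] [Finite K]
    [AddCommGroup X] [AddCommGroup Z] [Module K X] [Module K Z] [Module.Finite K X]
    [Module.Finite K Z] (Q : QuadraticMap K X Z) (hQ : ∀ x, Q x = 0 → x = 0) :
    Module.finrank K X ≤ 2 * Module.finrank K Z := by
  classical
  have := Fintype.ofFinite K
  by_contra! hlt
  let b := Module.finBasis K X
  let c := Module.finBasis K Z
  let f : Fin (Module.finrank K Z) → MvPolynomial (Fin (Module.finrank K X)) K := fun k =>
    ∑ i, ∑ j, MvPolynomial.C (c.repr (Q.toBilin b (b i) (b j)) k) *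
      (MvPolynomial.X i * MvPolynomial.X j)
  have hf (x) (k) : MvPolynomial.eval x (f k) = c.repr (Q (∑ i, x i • b i)) k := by
    conv_rhs => rw [← QuadraticMap.toQuadraticMap_toBilin Q b]
    simp only [f, LinearMap.BilinMap.toQuadraticMap_apply, map_sum, map_smul, map_mul,
      LinearMap.sum_apply, LinearMap.smul_apply, MvPolynomial.eval_C, MvPolynomial.eval_X,
      Finsupp.finsetSum_apply, Finsupp.smul_apply, smul_eq_mul, Finset.mul_sum]
    rw [Finset.sum_comm]
    exact Finset.sum_congr rfl fun i _ => Finset.sum_congr rfl fun j _ => by ring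
  have hdeg (k) : (f k).totalDegree ≤ 2 := by
    refine MvPolynomial.totalDegree_finsetSum_le fun i _ =>
      MvPolynomial.totalDegree_finsetSum_le fun j _ => ?_
    refine (MvPolynomial.totalDegree_mul _ _).trans ?_
    rw [MvPolynomial.totalDegree_C, zero_add]
    refine (MvPolynomial.totalDegree_mul _ _).trans ?_
    simp
  have hsum : ∑ k, (f k).totalDegree < Fintype.card (Fin (Module.finrank K X)) := by
    refine (Finset.sum_le_card_nsmul _ _ 2 fun k _ => hdeg k).trans_lt ?_
    simpa [mul_comm] using hlt
  have hdvd := char_dvd_card_solutions_of_fintype_sum_lt (ringChar K) hsum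
  have huniq (x : Fin (Module.finrank K X) → K) :
      (∀ k, MvPolynomial.eval x (f k) = 0) ↔ x = 0 := by
    constructor
    · intro h
      have h0 : Q (∑ i, x i • b i) = 0 := by
        apply c.repr.injective
        ext k
        rw [← hf, h k]
        simp
      funext i
      rw [← b.repr_sum_self x, hQ _ h0]
      simp
    · rintro rfl k
      rw [hf]
      simp
  rw [Fintype.card_eq_nat_card, Nat.card_congr (Equiv.subtypeEquivRight huniq),
    Nat.card_unique, Nat.dvd_one] at hdvd
  exact CharP.ringChar_ne_one hdvd

/-- If squaring is an anisotropic quadratic map from the quotient by the central subgroup `N` to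
`Z`, then the rank of the quotient is at most twice the rank of `Z`. -/
theorem rank_quotient_le_of_sq_anisotropic {C : Type*} [Group C] [Finite C]
    (N Z : Subgroup C) [N.Normal]
    (hNc : N ≤ Subgroup.center C) (hNsq : ∀ v ∈ N, v * v = 1) (hZN : Z ≤ N)
    (hsq : ∀ c : C, c * c ∈ Z) (hN : ∀ c : C, c * c = 1 → c ∈ N) {n z : ℕ}
    (hn : N.index = 2 ^ n) (hz : Nat.card Z = 2 ^ z) : n ≤ 2 * z := by
  have hQ2 (x : C ⧸ N) : x * x = 1 := by
    induction x using QuotientGroup.induction_on with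
    | H c =>
      rw [← QuotientGroup.mk_mul, QuotientGroup.eq_one_iff]
      exact hZN (hsq c)
  let _ : CommGroup (C ⧸ N) :=
    { mul_comm := fun x y => by
        have h (a : C ⧸ N) : a⁻¹ = a := inv_eq_of_mul_eq_one_left (hQ2 a)
        rw [← h (x * y), mul_inv_rev, h, h] }
  let _ : CommGroup Z :=
    { mul_comm := fun x y => Subtype.ext
        (Subgroup.mem_center_iff.1 (hNc (hZN y.2)) x) }
  have hZ2 (x : Z) : x * x = 1 := Subtype.ext (hNsq x (hZN x.2))
  let q : C ⧸ N → Z := Quotient.lift (fun c => ⟨c * c, hsq c⟩) (by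
    intro a b hab
    obtain ⟨v, hm, rfl⟩ : ∃ v ∈ N, b = a * v :=
      ⟨a⁻¹ * b, QuotientGroup.leftRel_apply.1 hab, by group⟩
    have hc := Subgroup.mem_center_iff.1 (hNc hm)
    apply Subtype.ext
    change a * a = a * v * (a * v)
    rw [hc a, mul_assoc v, ← mul_assoc a v a, hc a, mul_assoc v, ← mul_assoc v, hNsq v hm, one_mul])
  have hq (c : C) : (q (c : C ⧸ N) : C) = c * c := rfl
  let K (x y : C ⧸ N) : Z := q (x * y) * q x * q y
  have hK (c d : C) : d * c = c * d * K c d := by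
    have hc (a : Z) (g : C) : g * a = a * g := Subgroup.mem_center_iff.1 (hNc (hZN a.2)) g
    have hT : c * d * (c * d) = (q ((c * d : C) : C ⧸ N) : C) := rfl
    refine mul_left_cancel (a := c * d) ?_
    calc c * d * (d * c) = c * (d * d) * c := by group
      _ = q c * q d := by rw [← hq d, hc (q d) c, mul_assoc, ← hq c, hc (q c)]
      _ = (q ((c * d : C) : C ⧸ N) * q ((c * d : C) : C ⧸ N) : Z) * (q c * q d : Z) := by
        rw [hZ2, Subgroup.coe_one, one_mul, Subgroup.coe_mul]
      _ = c * d * (c * d * K c d) := by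
        rw [← mul_assoc, hT]
        simp only [K, Subgroup.coe_mul, mul_assoc, QuotientGroup.mk_mul]
  have hKmul (x y t : C ⧸ N) : K (x * y) t = K x t * K y t := by
    induction x using QuotientGroup.induction_on with | H x
    induction y using QuotientGroup.induction_on with | H y
    induction t using QuotientGroup.induction_on with | H t
    have hc (a : Z) (g : C) : g * a = a * g := Subgroup.mem_center_iff.1 (hNc (hZN a.2)) g
    apply Subtype.ext
    refine mul_left_cancel (a := x * y * t) ?_
    have h := hK (x * y) t
    calc x * y * t * K (x * y) t = t * x * y := h.symm.trans (mul_assoc t x y).symm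
      _ = x * t * (y * K x t) := by rw [hK x t, mul_assoc (x * t), ← hc]
      _ = x * (t * y) * K x t := by simp only [mul_assoc]
      _ = x * (y * t * K y t) * K x t := by rw [hK y t]
      _ = x * y * t * ((K y t : C) * K x t) := by simp only [mul_assoc]
      _ = x * y * t * (K x t * K y t : Z) := by rw [mul_comm (K x t)]; rfl
  have hsub (x y : Additive Z) : x - y = x + y := by
    rw [sub_eq_add_neg, neg_eq_of_add_eq_zero_left (hZ2 y)]
  let _ : Module (ZMod 2) (Additive (C ⧸ N)) :=
    AddCommGroup.zmodModule fun x => (two_nsmul x).trans (hQ2 x)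
  let _ : Module (ZMod 2) (Additive Z) :=
    AddCommGroup.zmodModule fun x => (two_nsmul x).trans (hZ2 x)
  let f : Additive (C ⧸ N) → Additive Z := q
  have hf0 : f 0 = 0 := Subtype.ext (mul_one 1)
  have h01 : ∀ a : ZMod 2, a = 0 ∨ a = 1 := by decide
  let Q : QuadraticMap (ZMod 2) (Additive (C ⧸ N)) (Additive Z) := QuadraticMap.ofPolar f
    (by
      intro a x
      obtain rfl | rfl := h01 a <;> simp [hf0])
    (by
      intro x y t
      simp only [QuadraticMap.polar, hsub]
      exact hKmul x y t)
    (by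
      intro a x y
      obtain rfl | rfl := h01 a <;> simp [hf0, QuadraticMap.polar])
  have hQ (x : Additive (C ⧸ N)) (hx : Q x = 0) : x = 0 := by
    obtain ⟨c, rfl⟩ := QuotientGroup.mk_surjective x
    exact (QuotientGroup.eq_one_iff c).2 (hN c (congrArg Subtype.val hx))
  have hrank := Q.finrank_le_two_mul_of_anisotropic hQ
  have h1 := Module.natCard_eq_pow_finrank (K := ZMod 2) (V := Additive (C ⧸ N))
  have h2 := Module.natCard_eq_pow_finrank (K := ZMod 2) (V := Additive Z)
  rw [Nat.card_zmod] at h1 h2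
  have h1' := Nat.pow_right_injective le_rfl (h1.symm.trans hn)
  have h2' := Nat.pow_right_injective le_rfl (h2.symm.trans hz)
  omega

theorem IsElemAbelian2.exists_fin_generators_mod {G : Type*} [Group G] [Finite G]
    {U V : Subgroup G} (hUV : U ≤ V) (hV : IsElemAbelian2 V) :
    ∃ (m u : ℕ) (v : Fin m → G), (∀ i, v i ∈ V) ∧ V ≤ Subgroup.closure (Set.range v) ⊔ U ∧
      Nat.card U = 2 ^ u ∧ Nat.card V = 2 ^ (m + u) := by
  let _ : CommGroup V := { mul_comm := fun x y => Subtype.ext (hV.2 x x.2 y y.2) }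
  let _ : Module (ZMod 2) (Additive V) :=
    AddCommGroup.zmodModule fun x => (two_nsmul x).trans (Subtype.ext (hV.1 x.toMul x.toMul.2))
  let S : Submodule (ZMod 2) (Additive V) :=
    AddSubgroup.toZModSubmodule 2 (Subgroup.toAddSubgroup (U.subgroupOf V))
  obtain ⟨T, hT⟩ := S.exists_isCompl
  let b := Module.finBasis (ZMod 2) T
  refine ⟨_, Module.finrank (ZMod 2) S, fun i => (((b i : Additive V).toMul : V) : G),
    fun i => SetLike.coe_mem _, ?_, ?_, ?_⟩
  · intro x hx
    obtain ⟨s, hs, t, ht, hst⟩ := Submodule.mem_sup.1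
      (hT.sup_eq_top ▸ Submodule.mem_top : Additive.ofMul (⟨x, hx⟩ : V) ∈ S ⊔ T)
    let P : Submodule (ZMod 2) (Additive V) := AddSubgroup.toZModSubmodule 2
      (Subgroup.toAddSubgroup
        ((Subgroup.closure (Set.range fun i => (((b i : Additive V).toMul : V) : G)) ⊔
          U).subgroupOf V))
    have hbP (i) : (b i : Additive V) ∈ P :=
      Subgroup.mem_sup_left (Subgroup.subset_closure ⟨i, rfl⟩)
    have hsP : s ∈ P := Subgroup.mem_sup_right hs
    have htP : t ∈ P := by
      have h := congrArg T.subtype (b.sum_repr ⟨t, ht⟩)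
      rw [map_sum] at h
      change _ = t at h
      rw [← h]
      exact P.sum_mem fun i _ => P.smul_mem _ (hbP i)
    exact (hst ▸ P.add_mem hsP htP : Additive.ofMul (⟨x, hx⟩ : V) ∈ P)
  · rw [← Nat.card_congr (Subgroup.subgroupOfEquivOfLe hUV).toEquiv]
    exact (Module.natCard_eq_pow_finrank (K := ZMod 2) (V := S)).trans (by rw [Nat.card_zmod])
  · rw [add_comm, Submodule.finrank_add_eq_of_isCompl hT]
    exact (Module.natCard_eq_pow_finrank (K := ZMod 2) (V := Additive V)).trans
      (by rw [Nat.card_zmod])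

section

open Subgroup
open scoped commutatorElement

theorem le_of_le_sup_commutator_top {G : Type*} [Group G] [Group.IsNilpotent G]
    {H V : Subgroup G} [H.Normal] (hV : V ≤ H ⊔ ⁅V, ⊤⁆) : V ≤ H := by
  obtain ⟨n, hn⟩ := Subgroup.nilpotent_iff_lowerCentralSeries.1 ‹Group.IsNilpotent G›
  suffices h : ∀ n, V ≤ H ⊔ (⊤ : Subgroup G).lowerCentralSeries n by simpa [hn] using h n
  intro n
  induction n with
  | zero => simp
  | succ n ih =>
    refine hV.trans (sup_le le_sup_left (commutator_le.2 fun g hg x _ => ?_))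
    obtain ⟨h, hh, l, hl, rfl⟩ := mem_sup_of_normal_left.1 (ih hg)
    have h1 : h * ⁅l, x⁆ * h⁻¹ ∈ (⊤ : Subgroup G).lowerCentralSeries (n + 1) :=
      Normal.conj_mem inferInstance _ (commutator_mem_commutator hl (mem_top x)) h
    have h2 : ⁅h, x⁆ ∈ H := by
      rw [commutatorElement_def, mul_assoc, mul_assoc, ← mul_assoc x]
      exact H.mul_mem hh (Normal.conj_mem inferInstance _ (H.inv_mem hh) x)
    have : ⁅h * l, x⁆ = h * ⁅l, x⁆ * h⁻¹ * ⁅h, x⁆ := by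
      simp only [commutatorElement_def]; group
    rw [this]
    exact mul_mem (mem_sup_right h1) (mem_sup_left h2)

/-- Commutators with `m` generators of `V` modulo `⁅V, G⁆` separate the cosets of the centralizer
of `V`. -/
theorem index_centralizer_le {G : Type*} [Group G] [Finite G] [Group.IsNilpotent G]
    {V : Subgroup G} [V.Normal] (hVV : V ≤ centralizer (V : Set G))
    (hW : ∀ x y : G ⧸ V, x * y = y * x)
    {m : ℕ} (v : Fin m → G) (hvV : ∀ i, v i ∈ V)
    (hv : V ≤ closure (Set.range v) ⊔ ⁅V, ⊤⁆) :
    (centralizer (V : Set G)).index ≤ Nat.card (⁅V, ⊤⁆ : Subgroup G) ^ m := by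
  let F : G → Fin m → (⁅V, ⊤⁆ : Subgroup G) := fun g i =>
    ⟨⁅v i, g⁆, commutator_mem_commutator (hvV i) (mem_top g)⟩
  have hF (g g' : G) (h : F g = F g') : g⁻¹ * g' ∈ centralizer (V : Set G) := by
    have hfix (i) : v i * (g⁻¹ * g') = g⁻¹ * g' * v i := by
      have h := congrArg Subtype.val (congrFun h i)
      simp only [F, commutatorElement_def, mul_assoc, mul_right_inj] at h
      have h : g * (v i)⁻¹ * g⁻¹ = g' * (v i)⁻¹ * g'⁻¹ := by simpa only [mul_assoc] using h
      have h : g * v i * g⁻¹ = g' * v i * g'⁻¹ := by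
        simpa only [mul_inv_rev, inv_inv, mul_assoc] using congrArg (·⁻¹) h
      calc v i * (g⁻¹ * g') = g⁻¹ * (g * v i * g⁻¹) * g' := by group
        _ = g⁻¹ * g' * v i := by rw [h]; group
    generalize g⁻¹ * g' = a at hfix ⊢
    let H := V ⊓ centralizer {a}
    have hH : H.Normal := ⟨fun t ht x => ⟨Normal.conj_mem inferInstance _ ht.1 x, by
      have hta := mem_centralizer_singleton_iff.1 ht.2
      refine mem_centralizer_singleton_iff.2 ?_
      obtain ⟨w, hw, hxw⟩ : ∃ w ∈ V, x⁻¹ * a * x = a * w := by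
        refine ⟨a⁻¹ * (x⁻¹ * a * x), ?_, by group⟩
        rw [← QuotientGroup.eq_one_iff]
        simp only [QuotientGroup.mk_mul, QuotientGroup.mk_inv, mul_assoc]
        rw [hW (a : G ⧸ V) x]
        simp
      have htw := hVV hw t ht.1
      calc x * t * x⁻¹ * a = x * (t * (x⁻¹ * a * x)) * x⁻¹ := by group
        _ = x * (x⁻¹ * a * x * t) * x⁻¹ := by
          rw [hxw, ← mul_assoc t, hta, mul_assoc a, htw, ← mul_assoc a]
        _ = a * (x * t * x⁻¹) := by group⟩⟩
    have hVH : V ≤ H := le_of_le_sup_commutator_top <| hv.trans <| sup_le_sup_right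
      ((closure_le _).2 <| by
        rintro _ ⟨i, rfl⟩
        exact ⟨hvV i, mem_centralizer_singleton_iff.2 (hfix i)⟩) _
    exact fun t ht => mem_centralizer_singleton_iff.1 (hVH ht).2
  rw [index_eq_card]
  calc Nat.card (G ⧸ centralizer (V : Set G))
      ≤ Nat.card (Fin m → (⁅V, ⊤⁆ : Subgroup G)) := by
        refine Nat.card_le_card_of_injective (fun x => F x.out) fun x y hxy => ?_
        have := hF _ _ hxy
        rw [← x.out_eq, ← y.out_eq]
        exact QuotientGroup.eq.2 this
    _ = _ := by simp [Nat.card_fun]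

theorem IsMaximalRank2.mem_of_sq_eq_one {G : Type*} [Group G] [Finite G] {V : Subgroup G}
    [V.Normal] (hV : IsElemAbelian2 V) (hmax : IsMaximalRank2 V) {c : G}
    (hc : c ∈ centralizer (V : Set G)) (hc2 : c * c = 1) : c ∈ V := by
  have hz (z : G) (h : z ∈ zpowers c) : z = 1 ∨ z = c := by
    obtain ⟨k, rfl⟩ := mem_zpowers_iff.1 h
    obtain ⟨l, rfl | rfl⟩ := k.even_or_odd'
    · left; rw [zpow_mul, zpow_two, hc2, one_zpow]
    · right; rw [zpow_add, zpow_mul, zpow_two, hc2, one_zpow, one_mul, zpow_one]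
  have hA : IsElemAbelian2 (V ⊔ zpowers c) := by
    have hmem (x) (hx : x ∈ V ⊔ zpowers c) : ∃ y ∈ V, x = y ∨ x = y * c := by
      obtain ⟨y, hy, z, h, rfl⟩ := mem_sup_of_normal_left.1 hx
      obtain rfl | rfl := hz z h
      · exact ⟨y, hy, .inl (mul_one y)⟩
      · exact ⟨y, hy, .inr rfl⟩
    constructor
    · intro a ha
      obtain ⟨y, hy, rfl | rfl⟩ := hmem a ha
      · exact hV.1 _ hy
      · have h1 := hV.1 y hy
        have h2 : y * c = c * y := hc y hy
        grind
    · intro a ha b hb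
      obtain ⟨y, hy, hay⟩ := hmem a ha
      obtain ⟨z, hz, hbz⟩ := hmem b hb
      have h0 := hV.2 y hy z hz
      have h1 : y * c = c * y := hc y hy
      have h2 : z * c = c * z := hc z hz
      rcases hay with rfl | rfl <;> rcases hbz with rfl | rfl <;> grind
  have := eq_of_le_of_card_ge (le_sup_left : V ≤ V ⊔ zpowers c) (hmax _ hA)
  rw [this]
  exact mem_sup_right (mem_zpowers c)

end

theorem stmt2 (G : Type*) [Group G] [Finite G] (V : Subgroup G) [V.Normal]
    (hV : IsElemAbelian2 V) (hmax : IsMaximalRank2 V)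
    (hW : ∀ w : G ⧸ V, w * w = 1)
    (nV nW nZ : ℕ)
    (hnV : Nat.card V = 2 ^ nV)
    (hnW : Nat.card (G ⧸ V) = 2 ^ nW)
    (hnZ : Nat.card (V ⊓ Subgroup.center G : Subgroup G) = 2 ^ nZ) :
    4 * nW ≤ 8 * nZ + nV ^ 2 := by
  let C := Subgroup.centralizer (V : Set G)
  have hVC : V ≤ C := fun a ha b hb => hV.2 b hb a ha
  have hWcomm (x y : G ⧸ V) : x * y = y * x := by
    have h (a : G ⧸ V) : a⁻¹ = a := inv_eq_of_mul_eq_one_left (hW a)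
    rw [← h (x * y), mul_inv_rev, h, h]
  have hGcard : Nat.card G = 2 ^ (nW + nV) := by
    rw [Subgroup.card_eq_card_quotient_mul_card_subgroup V, hnV, hnW, pow_add]
  have := Fact.mk Nat.prime_two
  have : Group.IsNilpotent G := (IsPGroup.of_card hGcard).isNilpotent
  obtain ⟨a, -, ha⟩ := (Nat.dvd_prime_pow Nat.prime_two).1
    (hGcard ▸ C.index_dvd_card : C.index ∣ 2 ^ (nW + nV))
  obtain ⟨k, -, hk⟩ := (Nat.dvd_prime_pow Nat.prime_two).1
    (hnW ▸ (Subgroup.relIndex_dvd_index_of_le hVC) : V.relIndex C ∣ 2 ^ nW)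
  have hnWk : nW = k + a := Nat.pow_right_injective le_rfl <| by
    change 2 ^ nW = 2 ^ (k + a)
    rw [← hnW, ← Subgroup.index_eq_card, ← Subgroup.relIndex_mul_index hVC, ha, hk, pow_add]
  have hZC : V ⊓ Subgroup.center G ≤ C := inf_le_left.trans hVC
  have hk2 : k ≤ 2 * nZ := by
    refine rank_quotient_le_of_sq_anisotropic (V.subgroupOf C)
      ((V ⊓ Subgroup.center G).subgroupOf C) ?_ ?_ ?_ ?_ ?_ hk ?_
    · intro x hx
      exact Subgroup.mem_center_iff.2 fun g => Subtype.ext (g.2 x hx).symm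
    · exact fun v hv => Subtype.ext (hV.1 v hv)
    · exact Subgroup.comap_mono inf_le_left
    · intro c
      have hsqV (g : G) : g * g ∈ V := (QuotientGroup.eq_one_iff _).1 (hW g)
      refine Subgroup.mem_subgroupOf.2 ⟨hsqV c, Subgroup.mem_center_iff.2 fun g => ?_⟩
      obtain ⟨w, hw, h⟩ : ∃ w ∈ V, g * c = c * g * w := by
        refine ⟨(c * g : G)⁻¹ * (g * c), ?_, by group⟩
        rw [← QuotientGroup.eq_one_iff]
        simp only [QuotientGroup.mk_mul, QuotientGroup.mk_inv]
        rw [hWcomm (g : G ⧸ V), inv_mul_cancel]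
      have hwc : w * c = c * w := c.2 w hw
      change g * (c * c : G) = c * c * g
      calc g * (c * c : G) = c * g * (w * c) := by rw [← mul_assoc, h, mul_assoc]
        _ = c * (g * c) * w := by rw [hwc]; group
        _ = c * c * g * (w * w) := by rw [h]; group
        _ = c * c * g := by rw [hV.1 w hw, mul_one]
    · exact fun c hc => hmax.mem_of_sq_eq_one hV c.2 (congrArg Subtype.val hc)
    · rw [Nat.card_congr (Subgroup.subgroupOfEquivOfLe hZC).toEquiv, hnZ]
  obtain ⟨m, u, v, hvV, hv, hu, hmu⟩ := IsElemAbelian2.exists_fin_generators_mod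
    (Subgroup.commutator_le_left V ⊤) hV
  have hau : a ≤ u * m := by
    have := index_centralizer_le hVC hWcomm v hvV hv
    rw [hu, ← pow_mul] at this
    exact (Nat.pow_le_pow_iff_right one_lt_two).1 (ha ▸ this)
  have hnVmu : nV = m + u := Nat.pow_right_injective le_rfl (hnV.symm.trans hmu)
  subst hnVmu hnWk
  nlinarith [sq_nonneg ((m : ℤ) - u)]
end
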